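/- Let (T, R, A) be weakly G-quasiapproximable or weakly G-approximable. Then for any integer i, any positive integer m, and any K ∈ T^c ∩ R_i, there exist an object L and a distinguished triangle E → K ⊕ L → D → ΣE with E ∈ G^{[-A-m+1-i, A-i]} and D ∈ G^{(-∞, A-m-i]}. If (T, R, A) is moreover G-quasiapproximable or G-approximable, then the triangle can be chosen with E ∈ G^{[-A-m+1-i, A-i]}_{mA}. -/

import Mathlib

namespace GApprox

open CategoryTheory CategoryTheory.Limits CategoryTheory.Pretriangulated

universe w v u

variable (C : Type u) [Category.{v} C] [HasZeroObject C] [HasShift C ℤ]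
  [Preadditive C] [∀ n : ℤ, (shiftFunctor C n).Additive] [Pretriangulated C]
  [HasCoproducts.{v} C]

/-- The right orthogonal of a class of objects. -/
def rOrth (A : Set C) : Set C := {X | ∀ a ∈ A, ∀ f : a ⟶ X, f = 0}

/-- The left orthogonal of a class of objects. -/
def lOrth (A : Set C) : Set C := {X | ∀ a ∈ A, ∀ f : X ⟶ a, f = 0}

/-- `Hom(A, B) = 0`. -/
def homZero (A B : Set C) : Prop := ∀ a ∈ A, ∀ b ∈ B, ∀ f : a ⟶ b, f = 0

/-- The star operation `A ⋆ B`: objects `Y` admitting a distinguished triangle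
`X ⟶ Y ⟶ Z ⟶ ΣX` with `X ∈ A` and `Z ∈ B`. -/
def starSet (A B : Set C) : Set C :=
  {Y | ∃ (X Z : C) (f : X ⟶ Y) (g : Y ⟶ Z) (h : Z ⟶ X⟦(1 : ℤ)⟧),
    Triangle.mk f g h ∈ (distTriang C) ∧ X ∈ A ∧ Z ∈ B}

/-- The (strictly full) shift `Σⁿ A` of a class of objects. -/
def shiftSet (n : ℤ) (A : Set C) : Set C :=
  {X | ∃ a ∈ A, Nonempty (X ≅ (shiftFunctor C n).obj a)}

/-- An object is compact if any map to a coproduct factors through a finite subcoproduct. -/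
def IsCompactObj (X : C) : Prop :=
  ∀ (α : Type v) (f : α → C) (g : X ⟶ ∐ f),
    ∃ (s : Finset α) (h : X ⟶ ∐ (fun i : {a : α // a ∈ s} => f i.1)),
      g = h ≫ Sigma.desc (fun i => Sigma.ι f i.1)

/-- The class of compact objects `T^c`. -/
def compacts : Set C := {X | IsCompactObj C X}

/-- The category is compactly generated. -/
def CompactlyGenerated : Prop :=
  ∀ X : C, (∀ K ∈ compacts C, ∀ f : K ⟶ X, f = 0) → IsZero X

/-- Closure under direct summands (retracts), `smd`. -/
def smd (A : Set C) : Set C :=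
  {X | ∃ Y ∈ A, ∃ (i : X ⟶ Y) (r : Y ⟶ X), i ≫ r = 𝟙 X}

/-- Closure of a class of objects under finite direct sums and extensions (`coprod`). -/
inductive extClosure (U : Set C) : C → Prop
  | of {X : C} : X ∈ U → extClosure U X
  | zero {X : C} : IsZero X → extClosure U X
  | ext {X Y Z : C} (f : X ⟶ Y) (g : Y ⟶ Z) (h : Z ⟶ X⟦(1 : ℤ)⟧) :
      Triangle.mk f g h ∈ (distTriang C) → extClosure U X → extClosure U Z → extClosure U Y

/-- Closure of a class of objects under arbitrary coproducts, extensions and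
direct summands. -/
inductive bigClosure (U : Set C) : C → Prop
  | of {X : C} : X ∈ U → bigClosure U X
  | zero {X : C} : IsZero X → bigClosure U X
  | coprod {α : Type v} (f : α → C) :
      (∀ i, bigClosure U (f i)) → ∀ {X : C}, (X ≅ ∐ f) → bigClosure U X
  | ext {X Y Z : C} (f : X ⟶ Y) (g : Y ⟶ Z) (h : Z ⟶ X⟦(1 : ℤ)⟧) :
      Triangle.mk f g h ∈ (distTriang C) → bigClosure U X → bigClosure U Z → bigClosure U Y
  | retract {X Y : C} (i : X ⟶ Y) (r : Y ⟶ X) :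
      i ≫ r = 𝟙 X → bigClosure U Y → bigClosure U X

/-- Closure of a class of objects under finite direct sums, `add`. -/
def addClosure (U : Set C) : Set C :=
  {X | ∃ (n : ℕ) (f : ULift.{v} (Fin n) → C), (∀ i, f i ∈ U) ∧ Nonempty (X ≅ ∐ f)}

/-- Closure of a class of objects under arbitrary coproducts, `Add`. -/
def bigAddClosure (U : Set C) : Set C :=
  {X | ∃ (α : Type v) (f : α → C), (∀ i, f i ∈ U) ∧ Nonempty (X ≅ ∐ f)}

/-- `coprod_n(U)`. -/
def coprodPow (U : Set C) : ℕ → Set C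
  | 0 => {X | IsZero X}
  | n + 1 => starSet C (addClosure C U) (coprodPow U n)

/-- `Coprod_n(U)`. -/
def coprodPowBig (U : Set C) : ℕ → Set C
  | 0 => {X | IsZero X}
  | n + 1 => starSet C (bigAddClosure C U) (coprodPowBig U n)

/-- `G[a,b] = ∪ { G^m : a ≤ m ≤ b }`. -/
def unionIcc (G : ℤ → Set C) (a b : ℤ) : Set C := ⋃ m ∈ Set.Icc a b, G m

/-- `G(-∞,b] = ∪ { G^m : m ≤ b }`. -/
def unionIic (G : ℤ → Set C) (b : ℤ) : Set C := ⋃ m ∈ Set.Iic b, G m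

/-- `G(-∞,∞) = ∪ { G^m : m ∈ ℤ }`. -/
def unionAll (G : ℤ → Set C) : Set C := ⋃ m : ℤ, G m

/-- `G^{[a,b]} = smd(coprod(G[a,b]))`. -/
def gInt (G : ℤ → Set C) (a b : ℤ) : Set C :=
  smd C {X | extClosure C (unionIcc C G a b) X}

/-- `G^{(-∞,b]} = smd(coprod(G(-∞,b]))`. -/
def gIic (G : ℤ → Set C) (b : ℤ) : Set C :=
  smd C {X | extClosure C (unionIic C G b) X}

/-- `G^{[a,b]}_k = smd(coprod_k(G[a,b]))`. -/
def gIntPow (G : ℤ → Set C) (a b k : ℤ) : Set C :=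
  smd C (coprodPow C (unionIcc C G a b) k.toNat)

/-- `Ḡ^{[a,b]}`. -/
def gBarInt (G : ℤ → Set C) (a b : ℤ) : Set C :=
  {X | bigClosure C (unionIcc C G a b) X}

/-- `Ḡ^{(-∞,b]}`. -/
def gBarIic (G : ℤ → Set C) (b : ℤ) : Set C :=
  {X | bigClosure C (unionIic C G b) X}

/-- `Ḡ^{[a,b]}_k = smd(Coprod_k(G[a,b]))`. -/
def gBarIntPow (G : ℤ → Set C) (a b k : ℤ) : Set C :=
  smd C (coprodPowBig C (unionIcc C G a b) k.toNat)

/-- `M^G_n := G^{(-∞,-n]}`. -/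
def MG (G : ℤ → Set C) (n : ℤ) : Set C := gIic C G (-n)

/-- `R^G_n := ⊥((M^G_n)^⊥)`, orthogonals taken in the whole category. -/
def RG (G : ℤ → Set C) (n : ℤ) : Set C := lOrth C (rOrth C (MG C G n))

/-- A pre-generating sequence. -/
structure IsPreGenSeq (G : ℤ → Set C) : Prop where
  compact : ∀ i : ℤ, G i ⊆ compacts C
  generates : smd C {X | extClosure C (unionAll C G) X} = compacts C

/-- A generating sequence. -/
structure IsGenSeq (G : ℤ → Set C) extends IsPreGenSeq C G : Prop where
  shift_cond : ∀ n : ℤ,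
    shiftSet C (-1) (G n) ∪ G n ∪ shiftSet C 1 (G n) ⊆ gInt C G (n - 1) (n + 1)

/-- A finite generating sequence. -/
structure IsFinGenSeq (G : ℤ → Set C) extends IsGenSeq C G : Prop where
  finite : ∀ i : ℤ, (G i).Finite

/-- ℕ-equivalence of generating sequences. -/
def GenSeqNEquiv (G G' : ℤ → Set C) : Prop :=
  ∃ N : ℤ, 0 ≤ N ∧ (∀ n : ℤ, G' n ⊆ gInt C G (n - N) (n + N)) ∧
    ∀ n : ℤ, G n ⊆ gInt C G' (n - N) (n + N)

/-- ℕ-equivalence of (extended good) metrics. -/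
def MetricNEquiv (M N : ℤ → Set C) : Prop :=
  ∃ n : ℤ, 0 ≤ n ∧ (∀ i : ℤ, M (i + n) ⊆ N i) ∧ ∀ i : ℤ, N (i + n) ⊆ M i

/-- An extended good metric. -/
structure IsExtGoodMetric (M : ℤ → Set C) : Prop where
  zero_mem : ∀ (n : ℤ) (X : C), IsZero X → X ∈ M n
  iso_closed : ∀ (n : ℤ) ⦃X Y : C⦄, (X ≅ Y) → X ∈ M n → Y ∈ M n
  star_subset : ∀ n : ℤ, starSet C (M n) (M n) ⊆ M n
  shift_one : ∀ n : ℤ, shiftSet C 1 (M (n + 1)) ⊆ M n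
  antitone : ∀ n : ℤ, M (n + 1) ⊆ M n
  shift_neg_one : ∀ n : ℤ, shiftSet C (-1) (M (n + 1)) ⊆ M n

/-- An orthogonal metric. -/
structure IsOrthMetric (M : ℤ → Set C) extends IsExtGoodMetric C M : Prop where
  orth : ∀ n : ℤ, lOrth C (rOrth C (M n)) = M n

/-- The closure of the compacts `T̄^c := ∩ₙ T^c ⋆ Rₙ`. -/
def closCompacts (Rm : ℤ → Set C) : Set C := ⋂ n : ℤ, starSet C (compacts C) (Rm n)

/-- `(T, R, A)` is `G`-preapproximable. -/
structure IsGPreApprox (G Rm : ℤ → Set C) (A : ℤ) : Prop where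
  orthMetric : IsOrthMetric C Rm
  A_pos : 0 < A
  cond0 : ∀ i : ℤ, MG C G i ⊆ ⋃ n ∈ {n : ℤ | |n| ≤ A}, shiftSet C n (MG C G (i + 1))
  cond1 : ∀ i : ℤ, MG C G (i + A) ⊆ Rm i ∩ compacts C
  cond2 : ∀ n : ℤ, ∃ N : ℤ, ∀ i : ℤ, N ≤ i → homZero C (G n) (Rm i)

/-- There is a distinguished triangle `E ⟶ F ⟶ D ⟶ ΣE` with `E ∈ S` and `D ∈ D`. -/
def approxTriangle (F : C) (S D : Set C) : Prop :=
  ∃ (E Dd : C) (f : E ⟶ F) (g : F ⟶ Dd) (h : Dd ⟶ E⟦(1 : ℤ)⟧),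
    Triangle.mk f g h ∈ (distTriang C) ∧ E ∈ S ∧ Dd ∈ D

/-- `(T, R, A)` is weakly `G`-approximable. -/
structure IsWeakGApprox (G Rm : ℤ → Set C) (A : ℤ) extends IsGPreApprox C G Rm A : Prop where
  hom_vanish : ∀ n i : ℤ, A ≤ n + i → homZero C (G n) (Rm i)
  approx : ∀ i : ℤ, ∀ F ∈ Rm i,
    approxTriangle C F (gBarInt C G (-A - i) (A - i)) (Rm (i + 1))

/-- `(T, R, A)` is `G`-approximable. -/
structure IsGApprox (G Rm : ℤ → Set C) (A : ℤ) extends IsWeakGApprox C G Rm A : Prop where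
  approx' : ∀ i : ℤ, ∀ F ∈ Rm i,
    approxTriangle C F (gBarIntPow C G (-A - i) (A - i) A) (Rm (i + 1))

/-- `(T, R, A)` is weakly `G`-quasiapproximable. -/
structure IsWeakGQuasiApprox (G Rm : ℤ → Set C) (A : ℤ) extends IsGPreApprox C G Rm A : Prop where
  hom_vanish : ∀ n i : ℤ, A ≤ n + i → homZero C (G n) (Rm i)
  approx : ∀ i : ℤ, ∀ F ∈ Rm i ∩ closCompacts C Rm,
    approxTriangle C F (gBarInt C G (-A - i) (A - i)) (Rm (i + 1) ∩ closCompacts C Rm)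

/-- `(T, R, A)` is `G`-quasiapproximable. -/
structure IsGQuasiApprox (G Rm : ℤ → Set C) (A : ℤ) extends IsWeakGQuasiApprox C G Rm A : Prop where
  approx' : ∀ i : ℤ, ∀ F ∈ Rm i ∩ closCompacts C Rm,
    approxTriangle C F (gBarIntPow C G (-A - i) (A - i) A) (Rm (i + 1) ∩ closCompacts C Rm)

/-- The coproduct of a sequence of objects. -/
noncomputable def seqCoprod (E : ℕ → C) : C := ∐ (fun n : ULift.{v} ℕ => E n.down)

/-- The canonical inclusion into the coproduct of a sequence. -/
noncomputable def seqInj (E : ℕ → C) (n : ℕ) : E n ⟶ seqCoprod C E :=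
  Sigma.ι (fun n : ULift.{v} ℕ => E n.down) (ULift.up n)

/-- The map `1 - shift` on the coproduct of a sequence. -/
noncomputable def oneMinusShift (E : ℕ → C) (e : ∀ n, E n ⟶ E (n + 1)) :
    seqCoprod C E ⟶ seqCoprod C E :=
  Sigma.desc (fun n => seqInj C E n.down - e n.down ≫ seqInj C E (n.down + 1))

/-- `H`, equipped with `π`, `δ`, is a homotopy colimit of the sequence `E`. -/
def IsHocolim (E : ℕ → C) (e : ∀ n, E n ⟶ E (n + 1)) (H : C)
    (π : seqCoprod C E ⟶ H) (δ : H ⟶ (seqCoprod C E)⟦(1 : ℤ)⟧) : Prop :=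
  Triangle.mk (oneMinusShift C E e) π δ ∈ (distTriang C)

/-- A single compact generator. -/
def IsCompactGenerator (G₀ : C) : Prop :=
  IsCompactObj C G₀ ∧ ∀ X : C, (∀ n : ℤ, ∀ f : (shiftFunctor C n).obj G₀ ⟶ X, f = 0) → IsZero X

/-- The strictly full subcategory `{Σʲ G₀}`. -/
def singletonShift (G₀ : C) (j : ℤ) : Set C :=
  {X | Nonempty (X ≅ (shiftFunctor C j).obj G₀)}

/-- The generating sequence `Gⁿ := {Σ⁻ⁿ G₀}`. -/
def genSeqNeg (G₀ : C) (n : ℤ) : Set C := singletonShift C G₀ (-n)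

/-- The generating sequence `Gⁿ := {Σⁿ G₀}`. -/
def genSeqPos (G₀ : C) (n : ℤ) : Set C := singletonShift C G₀ n

/-- The direct sum of two objects, realized as a binary coproduct. -/
noncomputable def csum (X Y : C) : C := ∐ (fun b : ULift.{v} Bool => cond b.down X Y)

section Helpers

set_option linter.unusedSectionVars false

variable {C}

/-! ### Exactness of distinguished triangles -/

lemma tri_a {X Y Z : C} {f : X ⟶ Y} {g : Y ⟶ Z} {h : Z ⟶ X⟦(1 : ℤ)⟧}
    (hT : Triangle.mk f g h ∈ (distTriang C)) {t : C} (k : Y ⟶ t) (hk : f ≫ k = 0) :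
    ∃ m : Z ⟶ t, k = g ≫ m := Triangle.yoneda_exact₂ _ hT k hk

lemma tri_b {X Y Z : C} {f : X ⟶ Y} {g : Y ⟶ Z} {h : Z ⟶ X⟦(1 : ℤ)⟧}
    (hT : Triangle.mk f g h ∈ (distTriang C)) {t : C} (k : Z ⟶ t) (hk : g ≫ k = 0) :
    ∃ m : X⟦(1 : ℤ)⟧ ⟶ t, k = h ≫ m := Triangle.yoneda_exact₃ _ hT k hk

lemma tri_rot {X Y Z : C} {f : X ⟶ Y} {g : Y ⟶ Z} {h : Z ⟶ X⟦(1 : ℤ)⟧}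
    (hT : Triangle.mk f g h ∈ (distTriang C)) :
    Triangle.mk g h (-f⟦(1 : ℤ)⟧') ∈ (distTriang C) := rot_of_distTriang _ hT

lemma tri_c {X Y Z : C} {f : X ⟶ Y} {g : Y ⟶ Z} {h : Z ⟶ X⟦(1 : ℤ)⟧}
    (hT : Triangle.mk f g h ∈ (distTriang C)) {t : C} (k : X⟦(1 : ℤ)⟧ ⟶ t) (hk : h ≫ k = 0) :
    ∃ m : Y⟦(1 : ℤ)⟧ ⟶ t, k = f⟦(1 : ℤ)⟧' ≫ m := by
  obtain ⟨m, hm⟩ := tri_b (tri_rot hT) k hk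
  exact ⟨-m, by rw [hm]; simp⟩

lemma tri_d {X Y Z : C} {f : X ⟶ Y} {g : Y ⟶ Z} {h : Z ⟶ X⟦(1 : ℤ)⟧}
    (hT : Triangle.mk f g h ∈ (distTriang C)) {t : C} (k : Y⟦(1 : ℤ)⟧ ⟶ t)
    (hk : f⟦(1 : ℤ)⟧' ≫ k = 0) :
    ∃ m : Z⟦(1 : ℤ)⟧ ⟶ t, k = g⟦(1 : ℤ)⟧' ≫ m :=
  tri_c (tri_rot hT) k (by simp [hk])

lemma tri_e {X Y Z : C} {f : X ⟶ Y} {g : Y ⟶ Z} {h : Z ⟶ X⟦(1 : ℤ)⟧}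
    (hT : Triangle.mk f g h ∈ (distTriang C)) {t : C} (k : Z⟦(1 : ℤ)⟧ ⟶ t)
    (hk : g⟦(1 : ℤ)⟧' ≫ k = 0) :
    ∃ m : X⟦(1 : ℤ)⟧⟦(1 : ℤ)⟧ ⟶ t, k = h⟦(1 : ℤ)⟧' ≫ m :=
  tri_d (tri_rot hT) k hk

lemma tri_fg {X Y Z : C} {f : X ⟶ Y} {g : Y ⟶ Z} {h : Z ⟶ X⟦(1 : ℤ)⟧}
    (hT : Triangle.mk f g h ∈ (distTriang C)) : f ≫ g = 0 := comp_distTriang_mor_zero₁₂ _ hT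

lemma tri_gh {X Y Z : C} {f : X ⟶ Y} {g : Y ⟶ Z} {h : Z ⟶ X⟦(1 : ℤ)⟧}
    (hT : Triangle.mk f g h ∈ (distTriang C)) : g ≫ h = 0 := comp_distTriang_mor_zero₂₃ _ hT

lemma tri_hf {X Y Z : C} {f : X ⟶ Y} {g : Y ⟶ Z} {h : Z ⟶ X⟦(1 : ℤ)⟧}
    (hT : Triangle.mk f g h ∈ (distTriang C)) : h ≫ f⟦(1 : ℤ)⟧' = 0 :=
  comp_distTriang_mor_zero₃₁ _ hT

lemma tri_co2 {X Y Z : C} {f : X ⟶ Y} {g : Y ⟶ Z} {h : Z ⟶ X⟦(1 : ℤ)⟧}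
    (hT : Triangle.mk f g h ∈ (distTriang C)) {t : C} (k : t ⟶ Y) (hk : k ≫ g = 0) :
    ∃ m : t ⟶ X, k = m ≫ f := Triangle.coyoneda_exact₂ _ hT k hk

lemma tri_co3 {X Y Z : C} {f : X ⟶ Y} {g : Y ⟶ Z} {h : Z ⟶ X⟦(1 : ℤ)⟧}
    (hT : Triangle.mk f g h ∈ (distTriang C)) {t : C} (k : t ⟶ Z) (hk : k ≫ h = 0) :
    ∃ m : t ⟶ Y, k = m ≫ g := Triangle.coyoneda_exact₃ _ hT k hk

lemma tri_co1 {X Y Z : C} {f : X ⟶ Y} {g : Y ⟶ Z} {h : Z ⟶ X⟦(1 : ℤ)⟧}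
    (hT : Triangle.mk f g h ∈ (distTriang C)) {t : C} (k : t ⟶ X⟦(1 : ℤ)⟧)
    (hk : k ≫ f⟦(1 : ℤ)⟧' = 0) :
    ∃ m : t ⟶ Z, k = m ≫ h := Triangle.coyoneda_exact₁ _ hT k hk

lemma tr3_3 {X Y Z X' Y' Z' : C} {f : X ⟶ Y} {g : Y ⟶ Z} {h : Z ⟶ X⟦(1 : ℤ)⟧}
    {f' : X' ⟶ Y'} {g' : Y' ⟶ Z'} {h' : Z' ⟶ X'⟦(1 : ℤ)⟧}
    (hT : Triangle.mk f g h ∈ (distTriang C)) (hT' : Triangle.mk f' g' h' ∈ (distTriang C))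
    (a : X ⟶ X') (b : Y ⟶ Y') (e : f ≫ b = a ≫ f') :
    ∃ c : Z ⟶ Z', g ≫ c = b ≫ g' ∧ h ≫ a⟦(1 : ℤ)⟧' = c ≫ h' :=
  complete_distinguished_triangle_morphism _ _ hT hT' a b e

lemma tr3_1 {X Y Z X' Y' Z' : C} {f : X ⟶ Y} {g : Y ⟶ Z} {h : Z ⟶ X⟦(1 : ℤ)⟧}
    {f' : X' ⟶ Y'} {g' : Y' ⟶ Z'} {h' : Z' ⟶ X'⟦(1 : ℤ)⟧}
    (hT : Triangle.mk f g h ∈ (distTriang C)) (hT' : Triangle.mk f' g' h' ∈ (distTriang C))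
    (b : Y ⟶ Y') (c : Z ⟶ Z') (e : g ≫ c = b ≫ g') :
    ∃ a : X ⟶ X', f ≫ b = a ≫ f' ∧ h ≫ a⟦(1 : ℤ)⟧' = c ≫ h' :=
  complete_distinguished_triangle_morphism₁ _ _ hT hT' b c e

lemma tr3_2 {X Y Z X' Y' Z' : C} {f : X ⟶ Y} {g : Y ⟶ Z} {h : Z ⟶ X⟦(1 : ℤ)⟧}
    {f' : X' ⟶ Y'} {g' : Y' ⟶ Z'} {h' : Z' ⟶ X'⟦(1 : ℤ)⟧}
    (hT : Triangle.mk f g h ∈ (distTriang C)) (hT' : Triangle.mk f' g' h' ∈ (distTriang C))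
    (a : X ⟶ X') (c : Z ⟶ Z') (e : h ≫ a⟦(1 : ℤ)⟧' = c ≫ h') :
    ∃ b : Y ⟶ Y', f ≫ b = a ≫ f' ∧ g ≫ c = b ≫ g' :=
  complete_distinguished_triangle_morphism₂ _ _ hT hT' a c e

/-- Replacing the middle object of a distinguished triangle by an isomorphic one. -/
lemma tri_iso2 {X Y Z Y' : C} {f : X ⟶ Y} {g : Y ⟶ Z} {h : Z ⟶ X⟦(1 : ℤ)⟧}
    (hT : Triangle.mk f g h ∈ (distTriang C)) (e : Y ≅ Y') :
    Triangle.mk (f ≫ e.hom) (e.inv ≫ g) h ∈ (distTriang C) :=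
  isomorphic_distinguished _ hT _
    (Triangle.isoMk _ _ (Iso.refl _) e.symm (Iso.refl _) 
      (by change (f ≫ e.hom) ≫ e.inv = 𝟙 X ≫ f; simp)
      (by change (e.inv ≫ g) ≫ 𝟙 Z = e.inv ≫ g; simp)
      (by change h ≫ (shiftFunctor C (1 : ℤ)).map (𝟙 X) = 𝟙 Z ≫ h; simp))

/-- Reassociation without octahedra, up to an object with the same left
orthogonality properties. -/
lemma lemA {E₁ K D₁ E' D₂ : C} {a : E₁ ⟶ K} {b : K ⟶ D₁} {c : D₁ ⟶ E₁⟦(1 : ℤ)⟧}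
    {a' : E' ⟶ D₁} {b' : D₁ ⟶ D₂} {c' : D₂ ⟶ E'⟦(1 : ℤ)⟧}
    (h₁ : Triangle.mk a b c ∈ (distTriang C)) (h₂ : Triangle.mk a' b' c' ∈ (distTriang C)) :
    ∃ (E₂ D : C) (i : E₁ ⟶ E₂) (p : E₂ ⟶ E') (q : E' ⟶ E₁⟦(1 : ℤ)⟧)
      (φ : E₂ ⟶ K) (r : K ⟶ D) (s : D ⟶ E₂⟦(1 : ℤ)⟧),
      Triangle.mk i p q ∈ (distTriang C) ∧ Triangle.mk φ r s ∈ (distTriang C) ∧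
      ∀ t : C, (∀ x : D₂ ⟶ t, x = 0) → ∀ x : D ⟶ t, x = 0 := by
  obtain ⟨E₂, i, p, h₃⟩ := distinguished_cocone_triangle₂ (a' ≫ c)
  obtain ⟨φ, hφ₁, hφ₂⟩ := tr3_2 h₃ h₁ (𝟙 _) a' (by simp)
  rw [Category.id_comp] at hφ₁
  obtain ⟨D, r, s, h₄⟩ := distinguished_cocone_triangle φ
  refine ⟨E₂, D, i, p, _, φ, r, s, h₃, h₄, fun t ht x => ?_⟩
  have inj : ∀ k : K ⟶ t, φ ≫ k = 0 → k = 0 := by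
    intro k hk
    obtain ⟨d, rfl⟩ := tri_a h₁ k (by rw [← hφ₁, Category.assoc, hk, comp_zero])
    obtain ⟨e, he⟩ := tri_b h₃ (a' ≫ d) (by
      rw [← Category.assoc, hφ₂, Category.assoc, hk])
    obtain ⟨y, hy⟩ := tri_a h₂ (d - c ≫ e) (by
      rw [Preadditive.comp_sub, he, Category.assoc, sub_self])
    rw [ht y, comp_zero, sub_eq_zero] at hy
    rw [hy, ← Category.assoc, tri_gh h₁, zero_comp]
  have hx : r ≫ x = 0 := inj _ (by rw [← Category.assoc, tri_fg h₄, zero_comp])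
  obtain ⟨y, rfl⟩ := tri_b h₄ x hx
  have h5 : c ≫ i⟦(1 : ℤ)⟧' ≫ y = 0 := by
    obtain ⟨z, hz⟩ := tri_a h₂ (c ≫ i⟦(1 : ℤ)⟧' ≫ y) (by
      have := tri_hf h₃
      simp only [← Category.assoc] at this ⊢
      rw [this, zero_comp])
    rw [hz, ht z, comp_zero]
  obtain ⟨x₀, hx₀⟩ := tri_c h₁ _ h5
  obtain ⟨z, hz⟩ := tri_d h₃ (y - φ⟦(1 : ℤ)⟧' ≫ x₀) (by
    rw [Preadditive.comp_sub, hx₀, ← Category.assoc, ← Functor.map_comp, hφ₁, sub_self])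
  obtain ⟨w, rfl⟩ := tri_c h₂ z (ht _)
  rw [← Category.assoc, ← Functor.map_comp, hφ₂, Functor.map_comp, Category.assoc,
    sub_eq_iff_eq_add, ← Preadditive.comp_add] at hz
  rw [hz, ← Category.assoc, tri_hf h₄, zero_comp]

lemma lemB {Q X X'' K D V : C} {u : Q ⟶ X} {v : X ⟶ X''} {w : X'' ⟶ Q⟦(1 : ℤ)⟧}
    {f : X ⟶ K} {g : K ⟶ D} {h : D ⟶ X⟦(1 : ℤ)⟧} {g' : K ⟶ V} {h' : V ⟶ Q⟦(1 : ℤ)⟧}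
    (h₁ : Triangle.mk u v w ∈ (distTriang C)) (h₂ : Triangle.mk f g h ∈ (distTriang C))
    (h₃ : Triangle.mk (u ≫ f) g' h' ∈ (distTriang C)) :
    ∃ (D' : C) (q : X'' ⟶ V) (r : V ⟶ D') (s : D' ⟶ X''⟦(1 : ℤ)⟧),
      Triangle.mk q r s ∈ (distTriang C) ∧
      ∀ t : C, (∀ x : D ⟶ t, x = 0) → ∀ x : D' ⟶ t, x = 0 := by
  obtain ⟨q, hq₁, hq₂⟩ := tr3_3 h₁ h₃ (𝟙 _) f (by simp)
  rw [CategoryTheory.Functor.map_id, Category.comp_id] at hq₂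
  obtain ⟨D', r, s, h₄⟩ := distinguished_cocone_triangle q
  refine ⟨D', q, r, s, h₄, fun t ht x => ?_⟩
  have inj : ∀ n : V ⟶ t, q ≫ n = 0 → n = 0 := by
    intro n hn
    obtain ⟨d, hd⟩ := tri_a h₂ (g' ≫ n) (by
      rw [← Category.assoc, ← hq₁, Category.assoc, hn, comp_zero])
    rw [ht d, comp_zero] at hd
    obtain ⟨o, rfl⟩ := tri_b h₃ n hd
    obtain ⟨y, rfl⟩ := tri_c h₁ o (by rw [hq₂, Category.assoc, hn])
    obtain ⟨k, rfl⟩ := tri_c h₂ y (ht _)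
    have := tri_hf h₃
    rw [Functor.map_comp] at this
    simp only [← Category.assoc] at this ⊢
    rw [this, zero_comp]
  have hx : r ≫ x = 0 := inj _ (by rw [← Category.assoc, tri_fg h₄, zero_comp])
  obtain ⟨y, rfl⟩ := tri_b h₄ x hx
  obtain ⟨k, hk⟩ := tri_c h₂ (v⟦(1 : ℤ)⟧' ≫ y) (ht _)
  obtain ⟨l, rfl⟩ := tri_d h₃ k (by
    rw [Functor.map_comp, Category.assoc, ← hk, ← Category.assoc, ← Functor.map_comp,
      tri_fg h₁, Functor.map_zero, zero_comp])
  obtain ⟨m, hm⟩ := tri_e h₁ (y - q⟦(1 : ℤ)⟧' ≫ l) (by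
    rw [Preadditive.comp_sub, hk, ← Category.assoc, ← Category.assoc, ← Functor.map_comp,
      ← Functor.map_comp, hq₁, sub_self])
  rw [hq₂, Functor.map_comp, Category.assoc, sub_eq_iff_eq_add, ← Preadditive.comp_add] at hm
  rw [hm, ← Category.assoc, tri_hf h₄, zero_comp]

/-- `X` is a retract of `Y`. -/
def Retr (X Y : C) : Prop := ∃ (i : X ⟶ Y) (r : Y ⟶ X), i ≫ r = 𝟙 X

lemma Retr.refl (X : C) : Retr X X := ⟨𝟙 _, 𝟙 _, by simp⟩

lemma Retr.trans {X Y Z : C} (h : Retr X Y) (h' : Retr Y Z) : Retr X Z := by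
  obtain ⟨i, r, e⟩ := h
  obtain ⟨i', r', e'⟩ := h'
  refine ⟨i ≫ i', r' ≫ r, ?_⟩
  rw [Category.assoc, ← Category.assoc i', e', Category.id_comp, e]

/-- Retracts of the outer terms induce a retract of the middle term. -/
lemma retr_star {X Y Z X' Z' : C} {f : X ⟶ Y} {g : Y ⟶ Z} {h : Z ⟶ X⟦(1 : ℤ)⟧}
    (hT : Triangle.mk f g h ∈ (distTriang C)) (hX : Retr X X') (hZ : Retr Z Z') :
    ∃ (Y' : C) (f' : X' ⟶ Y') (g' : Y' ⟶ Z') (h' : Z' ⟶ X'⟦(1 : ℤ)⟧),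
      Triangle.mk f' g' h' ∈ (distTriang C) ∧ Retr Y Y' := by
  obtain ⟨i, r, e⟩ := hX
  obtain ⟨j, s, e'⟩ := hZ
  obtain ⟨Y', f', g', hT'⟩ := distinguished_cocone_triangle₂ (s ≫ h ≫ i⟦(1 : ℤ)⟧')
  obtain ⟨α, hα₁, hα₂⟩ := tr3_2 hT hT' i j (by
    rw [← Category.assoc j, e', Category.id_comp])
  obtain ⟨β, hβ₁, hβ₂⟩ := tr3_2 hT' hT r s (by
    rw [Category.assoc, Category.assoc, ← Functor.map_comp, e, CategoryTheory.Functor.map_id, Category.comp_id])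
  have : IsIso (α ≫ β) := by
    let φ : Triangle.mk f g h ⟶ Triangle.mk f g h :=
      { hom₁ := 𝟙 _
        hom₂ := α ≫ β
        hom₃ := 𝟙 _
        comm₁ := by
          change f ≫ α ≫ β = 𝟙 _ ≫ f
          rw [← Category.assoc, hα₁, Category.assoc, hβ₁, ← Category.assoc, e]
        comm₂ := by
          change g ≫ 𝟙 _ = (α ≫ β) ≫ g
          rw [Category.assoc, ← hβ₂, ← Category.assoc, ← hα₂, Category.assoc, e']
        comm₃ := by
          change h ≫ (shiftFunctor C (1 : ℤ)).map (𝟙 X) = 𝟙 Z ≫ h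
          simp }
    exact isIso₂_of_isIso₁₃ φ hT hT (inferInstanceAs (IsIso (𝟙 _)))
      (inferInstanceAs (IsIso (𝟙 _)))
  refine ⟨Y', f', g', _, hT', α, β ≫ inv (α ≫ β), ?_⟩
  rw [← Category.assoc, IsIso.hom_inv_id]

/-! ### Compact objects -/

open Classical in
/-- The idempotent of a coproduct projecting onto a finite subcoproduct. -/
noncomputable def projTo {α : Type v} (f : α → C) (s : Finset α) : ∐ f ⟶ ∐ f :=
  Sigma.desc (fun i => if i ∈ s then Sigma.ι f i else 0)

lemma ι_projTo_mem {α : Type v} (f : α → C) {s : Finset α} {i : α} (hi : i ∈ s) :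
    Sigma.ι f i ≫ projTo f s = Sigma.ι f i := by simp [projTo, hi]

lemma ι_projTo_not_mem {α : Type v} (f : α → C) {s : Finset α} {i : α} (hi : i ∉ s) :
    Sigma.ι f i ≫ projTo f s = 0 := by simp [projTo, hi]

lemma projTo_comp {α : Type v} (f : α → C) {s t : Finset α} (hst : s ⊆ t) :
    projTo f s ≫ projTo f t = projTo f s := by
  apply Sigma.hom_ext
  intro i
  by_cases hi : i ∈ s
  · rw [← Category.assoc, ι_projTo_mem f hi, ι_projTo_mem f (hst hi)]
  · rw [← Category.assoc, ι_projTo_not_mem f hi, zero_comp]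

lemma projTo_comp' {α : Type v} (f : α → C) {s t : Finset α} (hst : s ⊆ t) :
    projTo f t ≫ projTo f s = projTo f s := by
  apply Sigma.hom_ext
  intro i
  by_cases hi : i ∈ t
  · rw [← Category.assoc, ι_projTo_mem f hi]
  · rw [← Category.assoc, ι_projTo_not_mem f hi, zero_comp,
      ι_projTo_not_mem f (fun h => hi (hst h))]

lemma compact_iff (P : C) : P ∈ compacts C ↔
    ∀ (α : Type v) (f : α → C) (g : P ⟶ ∐ f), ∃ s : Finset α, g ≫ projTo f s = g := by
  constructor
  · intro hP α f g
    obtain ⟨s, h, rfl⟩ := hP α f g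
    refine ⟨s, ?_⟩
    rw [Category.assoc]
    congr 1
    apply Sigma.hom_ext
    intro i
    rw [← Category.assoc, Sigma.ι_desc, ι_projTo_mem f i.2]
  · intro hP α f g
    classical
    obtain ⟨s, hs⟩ := hP α f g
    refine ⟨s, g ≫ Sigma.desc (fun i => if hi : i ∈ s then
      Sigma.ι (fun i : {a : α // a ∈ s} => f i.1) ⟨i, hi⟩ else 0), ?_⟩
    conv_lhs => rw [← hs]
    rw [Category.assoc]
    congr 1
    apply Sigma.hom_ext
    intro i
    by_cases hi : i ∈ s
    · rw [ι_projTo_mem f hi, ← Category.assoc, Sigma.ι_desc, dif_pos hi, Sigma.ι_desc]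
    · rw [ι_projTo_not_mem f hi, ← Category.assoc, Sigma.ι_desc, dif_neg hi, zero_comp]

lemma compact_retr {X Y : C} (h : Retr X Y) (hY : Y ∈ compacts C) : X ∈ compacts C := by
  rw [compact_iff] at hY ⊢
  intro α f g
  obtain ⟨i, r, e⟩ := h
  obtain ⟨s, hs⟩ := hY α f (r ≫ g)
  refine ⟨s, ?_⟩
  calc g ≫ projTo f s = (i ≫ r) ≫ g ≫ projTo f s := by rw [e, Category.id_comp]
    _ = i ≫ (r ≫ g) ≫ projTo f s := by simp only [Category.assoc]
    _ = g := by rw [hs, ← Category.assoc, e, Category.id_comp]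

lemma compact_zero {X : C} (h : IsZero X) : X ∈ compacts C := by
  rw [compact_iff]
  intro α f g
  exact ⟨∅, h.eq_of_src _ _⟩

lemma compact_ext {X Y Z : C} {f : X ⟶ Y} {g : Y ⟶ Z} {h : Z ⟶ X⟦(1 : ℤ)⟧}
    (hT : Triangle.mk f g h ∈ (distTriang C)) (hX : X ∈ compacts C) (hZ : Z ∈ compacts C) :
    Y ∈ compacts C := by
  classical
  rw [compact_iff] at hX hZ ⊢
  intro α F k
  obtain ⟨s, hs⟩ := hX α F (f ≫ k)
  obtain ⟨l, hl⟩ := tri_a hT (k - k ≫ projTo F s) (by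
    rw [Preadditive.comp_sub, ← Category.assoc, hs, sub_self])
  obtain ⟨t, ht⟩ := hZ α F l
  refine ⟨s ∪ t, ?_⟩
  have h1 : k = g ≫ l + k ≫ projTo F s := by rw [← hl]; abel
  have h2 : l ≫ projTo F (s ∪ t) = l := by
    rw [← ht, Category.assoc, projTo_comp F Finset.subset_union_right]
  calc k ≫ projTo F (s ∪ t) = (g ≫ l + k ≫ projTo F s) ≫ projTo F (s ∪ t) := by rw [← h1]
    _ = g ≫ l + k ≫ projTo F s := by
      rw [Preadditive.add_comp, Category.assoc, h2, Category.assoc,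
        projTo_comp F Finset.subset_union_left]
    _ = k := h1.symm

lemma compact_shift (n m : ℤ) (hnm : n + m = 0) {X : C} (hX : X ∈ compacts C) :
    X⟦n⟧ ∈ compacts C := by
  rw [compact_iff] at hX ⊢
  intro α f g
  let S := shiftFunctor C m
  let u : X ≅ (X⟦n⟧)⟦m⟧ := ((shiftFunctorCompIsoId C n m hnm).app X).symm
  let e := PreservesCoproduct.iso S f
  obtain ⟨s, hs⟩ := hX α _ (u.hom ≫ S.map g ≫ e.hom)
  refine ⟨s, ?_⟩
  have comm : projTo (fun j => S.obj (f j)) s ≫ e.inv = e.inv ≫ S.map (projTo f s) := by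
    apply Sigma.hom_ext
    intro i
    rw [PreservesCoproduct.inv_hom, ι_comp_sigmaComparison_assoc, ← Functor.map_comp]
    by_cases hi : i ∈ s
    · rw [← Category.assoc, ι_projTo_mem _ hi, ι_projTo_mem _ hi, ι_comp_sigmaComparison]
    · rw [← Category.assoc, ι_projTo_not_mem _ hi, ι_projTo_not_mem _ hi, zero_comp,
        Functor.map_zero]
  apply S.map_injective
  rw [← cancel_epi u.hom]
  have := congrArg (fun z => z ≫ e.inv) hs
  simp only [Category.assoc] at this
  rw [comm] at this
  simpa using this

lemma compact_cone {X Y Z : C} {f : X ⟶ Y} {g : Y ⟶ Z} {h : Z ⟶ X⟦(1 : ℤ)⟧}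
    (hT : Triangle.mk f g h ∈ (distTriang C)) (hX : X ∈ compacts C) (hY : Y ∈ compacts C) :
    Z ∈ compacts C :=
  compact_ext (tri_rot hT) hY (compact_shift 1 (-1) (by norm_num) hX)

lemma compact_iso {X Y : C} (e : X ≅ Y) (hX : X ∈ compacts C) : Y ∈ compacts C :=
  compact_retr ⟨e.inv, e.hom, by simp⟩ hX

lemma compact_of_shift {X : C} (hX : X⟦(1 : ℤ)⟧ ∈ compacts C) : X ∈ compacts C :=
  compact_iso ((shiftFunctorCompIsoId C (1 : ℤ) (-1) (by norm_num)).app X)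
    (compact_shift (-1) 1 (by norm_num) hX)

lemma compact_fib {X Y Z : C} {f : X ⟶ Y} {g : Y ⟶ Z} {h : Z ⟶ X⟦(1 : ℤ)⟧}
    (hT : Triangle.mk f g h ∈ (distTriang C)) (hY : Y ∈ compacts C) (hZ : Z ∈ compacts C) :
    X ∈ compacts C :=
  compact_of_shift (compact_cone (tri_rot hT) hY hZ)

/-! ### Factorizations of maps from compact objects -/

/-- `f` factors through an object of `S`. -/
def FacMap (S : Set C) {P X : C} (f : P ⟶ X) : Prop :=
  ∃ Y ∈ S, ∃ (a : P ⟶ Y) (b : Y ⟶ X), f = a ≫ b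

/-- Every map from a compact object to `X` factors through an object of `S`. -/
def Fac (S : Set C) (X : C) : Prop := ∀ P ∈ compacts C, ∀ f : P ⟶ X, FacMap S f

lemma FacMap.mono {S S' : Set C} (h : S ⊆ S') {P X : C} {f : P ⟶ X} (hf : FacMap S f) :
    FacMap S' f := by
  obtain ⟨Y, hY, a, b, e⟩ := hf
  exact ⟨Y, h hY, a, b, e⟩

lemma Fac.mono {S S' : Set C} (h : S ⊆ S') {X : C} (hX : Fac S X) : Fac S' X :=
  fun P hP f => (hX P hP f).mono h

lemma Fac.retr {S : Set C} {X Y : C} (h : Retr X Y) (hY : Fac S Y) : Fac S X := by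
  intro P hP f
  obtain ⟨i, r, e⟩ := h
  obtain ⟨Z, hZ, a, b, e'⟩ := hY P hP (f ≫ i)
  refine ⟨Z, hZ, a, b ≫ r, ?_⟩
  rw [← Category.assoc, ← e', Category.assoc, e, Category.comp_id]

lemma Fac.compact_mem {S : Set C} {X : C} (hX : Fac S X) (hc : X ∈ compacts C) :
    ∃ Y ∈ S, Retr X Y := by
  obtain ⟨Y, hY, a, b, e⟩ := hX X hc (𝟙 X)
  exact ⟨Y, hY, a, b, e.symm⟩

lemma facMap_star {S S' : Set C} (hS' : S' ⊆ compacts C) {X Y Z P : C}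
    {f : X ⟶ Y} {g : Y ⟶ Z} {h : Z ⟶ X⟦(1 : ℤ)⟧}
    (hT : Triangle.mk f g h ∈ (distTriang C)) (hX : Fac S X) (hP : P ∈ compacts C)
    (k : P ⟶ Y) (hk : FacMap S' (k ≫ g)) : FacMap (starSet C S S') k := by
  obtain ⟨Z', hZ', p, z, e⟩ := hk
  obtain ⟨W, w, d, hW⟩ := distinguished_cocone_triangle₁ p
  obtain ⟨x, hx₁, hx₂⟩ := tr3_1 hW hT k z e.symm
  obtain ⟨X', hX', x₁, x₂, rfl⟩ := hX W (compact_fib hW hP (hS' hZ')) x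
  obtain ⟨Y', f', g', hT'⟩ := distinguished_cocone_triangle₂ (d ≫ x₁⟦(1 : ℤ)⟧')
  obtain ⟨α, hα₁, hα₂⟩ := tr3_2 hW hT' x₁ (𝟙 _) (by rw [Category.id_comp])
  obtain ⟨β, hβ₁, hβ₂⟩ := tr3_2 hT' hT x₂ z (by
    rw [Category.assoc, ← Functor.map_comp, hx₂])
  rw [Category.comp_id] at hα₂
  obtain ⟨y, hy⟩ := tri_a hW (k - α ≫ β) (by
    rw [Preadditive.comp_sub, hx₁, ← Category.assoc w, hα₁, Category.assoc, Category.assoc, hβ₁,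
      sub_self])
  refine ⟨Y', ⟨X', Z', f', g', _, hT', hX', hZ'⟩, α, β + g' ≫ y, ?_⟩
  rw [Preadditive.comp_add, ← Category.assoc, ← hα₂, ← hy]
  abel

lemma fac_star {S S' : Set C} (hS' : S' ⊆ compacts C) {X Y Z : C}
    {f : X ⟶ Y} {g : Y ⟶ Z} {h : Z ⟶ X⟦(1 : ℤ)⟧}
    (hT : Triangle.mk f g h ∈ (distTriang C)) (hX : Fac S X) (hZ : Fac S' Z) :
    Fac (starSet C S S') Y :=
  fun P hP k => facMap_star hS' hT hX hP k (hZ P hP _)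

lemma extClosure_compact {U : Set C} (hU : U ⊆ compacts C) {X : C} (h : extClosure C U X) :
    X ∈ compacts C := by
  induction h with
  | of h => exact hU h
  | zero h => exact compact_zero h
  | ext f g h hT _ _ ih₁ ih₂ => exact compact_ext hT ih₁ ih₂

lemma extClosure_mono {U V : Set C} (hU : U ⊆ V) {X : C} (h : extClosure C U X) :
    extClosure C V X := by
  induction h with
  | of h => exact .of (hU h)
  | zero h => exact .zero h
  | ext f g h hT _ _ ih₁ ih₂ => exact .ext f g h hT ih₁ ih₂

lemma extClosure_star {U : Set C} :
    starSet C {X | extClosure C U X} {X | extClosure C U X} ⊆ {X | extClosure C U X} := by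
  rintro Y ⟨X, Z, f, g, h, hT, hX, hZ⟩
  exact .ext f g h hT hX hZ

lemma facMap_zero {U : Set C} {P X : C} : FacMap {X | extClosure C U X} (0 : P ⟶ X) :=
  ⟨((HasZeroObject.zero' C).zero : C), .zero (isZero_zero C), 0, 0, by simp⟩

lemma facMap_add {U : Set C} {P X : C} {f g : P ⟶ X} (hf : FacMap {X | extClosure C U X} f)
    (hg : FacMap {X | extClosure C U X} g) : FacMap {X | extClosure C U X} (f + g) := by
  obtain ⟨Y, hY, a, b, rfl⟩ := hf
  obtain ⟨Y', hY', a', b', rfl⟩ := hg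
  have := binaryBiproductTriangle_distinguished Y Y'
  exact ⟨Y ⊞ Y', .ext _ _ _ this hY hY', biprod.lift a a', biprod.desc b b',
    (biprod.lift_desc).symm⟩

lemma fac_bigClosure {U : Set C} (hU : U ⊆ compacts C) {X : C} (h : bigClosure C U X) :
    Fac {X | extClosure C U X} X := by
  induction h with
  | of h => exact fun P hP f => ⟨_, .of h, f, 𝟙 _, by simp⟩
  | zero h => exact fun P hP f => ⟨_, .zero h, f, 𝟙 _, by simp⟩
  | @coprod α f hf X e ih =>
    refine Fac.retr (Y := ∐ f) ⟨e.hom, e.inv, by simp⟩ ?_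
    intro P hP g
    classical
    obtain ⟨s, hs⟩ := (compact_iff P).1 hP α f g
    rw [← hs]
    clear hs
    induction s using Finset.induction_on with
    | empty =>
      have : projTo f ∅ = 0 := by
        apply Sigma.hom_ext
        intro i
        rw [ι_projTo_not_mem f (by simp), comp_zero]
      rw [this, comp_zero]
      exact facMap_zero
    | @insert a s ha ihs =>
      let q : ∐ f ⟶ f a := Sigma.desc (fun i => if h : i = a then eqToHom (by rw [h]) else 0)
      have hq : projTo f (insert a s) = q ≫ Sigma.ι f a + projTo f s := by
        apply Sigma.hom_ext
        intro i
        rw [Preadditive.comp_add, ← Category.assoc, Sigma.ι_desc]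
        by_cases hi : i = a
        · subst hi
          rw [ι_projTo_mem f (by simp), ι_projTo_not_mem f ha]
          simp
        · rw [dif_neg hi, zero_comp, zero_add]
          by_cases his : i ∈ s
          · rw [ι_projTo_mem f (by simp [his]), ι_projTo_mem f his]
          · rw [ι_projTo_not_mem f (by simp [his, hi]), ι_projTo_not_mem f his]
      rw [hq, Preadditive.comp_add]
      refine facMap_add ?_ ihs
      obtain ⟨Y, hY, b, c, e⟩ := ih a P hP (g ≫ q)
      exact ⟨Y, hY, b, c ≫ Sigma.ι f a, by rw [← Category.assoc, e, Category.assoc]⟩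
  | ext f g h hT _ _ ih₁ ih₂ =>
    exact (fac_star (fun _ h => extClosure_compact hU h) hT ih₁ ih₂).mono extClosure_star
  | retract i r e _ ih => exact Fac.retr ⟨i, r, e⟩ ih

/-! ### Powers of classes of objects -/

/-- Right-nested star powers. -/
def PP (L : Set C) : ℕ → Set C
  | 0 => {X | IsZero X}
  | n + 1 => starSet C L (PP L n)

/-- Right-nested star powers with a base class. -/
def NN (L B : Set C) : ℕ → Set C
  | 0 => B
  | n + 1 => starSet C L (NN L B n)

lemma star_mono {L L' M M' : Set C} (h : L ⊆ L') (h' : M ⊆ M') :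
    starSet C L M ⊆ starSet C L' M' := by
  rintro Y ⟨X, Z, f, g, k, hT, hX, hZ⟩
  exact ⟨X, Z, f, g, k, hT, h hX, h' hZ⟩

lemma PP_mono {L L' : Set C} (h : L ⊆ L') (n : ℕ) : PP L n ⊆ PP L' n := by
  induction n with
  | zero => exact subset_rfl
  | succ n ih => exact star_mono h ih

lemma coprodPow_eq (U : Set C) (n : ℕ) : coprodPow C U n = PP (addClosure C U) n := by
  induction n with
  | zero => rfl
  | succ n ih => change starSet C _ _ = starSet C _ _; rw [ih]

lemma coprodPowBig_eq (U : Set C) (n : ℕ) : coprodPowBig C U n = PP (bigAddClosure C U) n := by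
  induction n with
  | zero => rfl
  | succ n ih => change starSet C _ _ = starSet C _ _; rw [ih]

lemma add_sub_bigAdd (U : Set C) : addClosure C U ⊆ bigAddClosure C U := by
  rintro X ⟨n, f, hf, e⟩
  exact ⟨_, f, hf, e⟩

lemma bigAdd_mono {U V : Set C} (h : U ⊆ V) : bigAddClosure C U ⊆ bigAddClosure C V := by
  rintro X ⟨n, f, hf, e⟩
  exact ⟨_, f, fun i => h (hf i), e⟩

lemma add_compact {U : Set C} (hU : U ⊆ compacts C) : addClosure C U ⊆ compacts C := by
  rintro X ⟨n, f, hf, ⟨e⟩⟩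
  refine compact_iso e.symm ?_
  rw [compact_iff]
  intro α F g
  classical
  have := fun i => (compact_iff (f i)).1 (hU (hf i)) α F (Sigma.ι f i ≫ g)
  choose s hs using this
  refine ⟨Finset.univ.biUnion s, ?_⟩
  apply Sigma.hom_ext
  intro i
  rw [← Category.assoc, ← hs i, Category.assoc _ (projTo F (s i)), projTo_comp]
  exact Finset.subset_biUnion_of_mem s (Finset.mem_univ i)

lemma coprodPow_compact {U : Set C} (hU : U ⊆ compacts C) (n : ℕ) :
    coprodPow C U n ⊆ compacts C := by
  induction n with
  | zero => exact fun X hX => compact_zero hX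
  | succ n ih =>
    rintro Y ⟨X, Z, f, g, h, hT, hX, hZ⟩
    exact compact_ext hT (add_compact hU hX) (ih hZ)

lemma fac_bigAdd {U : Set C} {X : C} (hX : X ∈ bigAddClosure C U) :
    Fac (addClosure C U) X := by
  obtain ⟨α, f, hf, ⟨e⟩⟩ := hX
  refine Fac.retr (Y := ∐ f) ⟨e.hom, e.inv, by simp⟩ ?_
  intro P hP g
  obtain ⟨s, h, hg⟩ := hP α f g
  refine ⟨_, ?_, h, _, hg⟩
  let ε : ULift.{v} (Fin s.card) ≃ {a : α // a ∈ s} := Equiv.ulift.trans s.equivFin.symm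
  refine ⟨s.card, fun i => f (ε i).1, fun i => hf _, ⟨?_⟩⟩
  exact (Sigma.whiskerEquiv ε (fun j => Iso.refl _)).symm

lemma fac_PP {U : Set C} (hU : U ⊆ compacts C) (n : ℕ) {X : C}
    (hX : X ∈ PP (bigAddClosure C U) n) : Fac (coprodPow C U n) X := by
  induction n generalizing X with
  | zero => exact fun P hP f => ⟨X, hX, f, 𝟙 _, by simp⟩
  | succ n ih =>
    obtain ⟨X', Z, f, g, h, hT, hX', hZ⟩ := hX
    exact fac_star (coprodPow_compact hU n) hT (fac_bigAdd hX') (ih hZ)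

lemma PP_bigClosure {U : Set C} (n : ℕ) {X : C}
    (hX : X ∈ PP (bigAddClosure C U) n) : bigClosure C U X := by
  induction n generalizing X with
  | zero => exact .zero hX
  | succ n ih =>
    obtain ⟨X', Z, f, g, h, hT, ⟨α, F, hF, ⟨e⟩⟩, hZ⟩ := hX
    exact .ext f g h hT (.coprod F (fun i => .of (hF i)) e) (ih hZ)

lemma bigClosure_mono {U V : Set C} (hU : U ⊆ V) {X : C} (h : bigClosure C U X) :
    bigClosure C V X := by
  induction h with
  | of h => exact .of (hU h)
  | zero h => exact .zero h
  | coprod f _ e ih => exact .coprod f ih e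
  | ext f g h hT _ _ ih₁ ih₂ => exact .ext f g h hT ih₁ ih₂
  | retract i r e _ ih => exact .retract i r e ih

lemma bigClosure_hom_zero {U : Set C} {t : C} (hU : ∀ a ∈ U, ∀ f : a ⟶ t, f = 0) {X : C}
    (h : bigClosure C U X) : ∀ f : X ⟶ t, f = 0 := by
  induction h with
  | of h => exact hU _ h
  | zero h => exact fun f => h.eq_of_src _ _
  | coprod F _ e ih =>
    intro f
    rw [← cancel_epi e.inv, comp_zero]
    apply Sigma.hom_ext
    intro i
    rw [ih i (Sigma.ι F i ≫ e.inv ≫ f), comp_zero]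
  | ext f g h hT _ _ ih₁ ih₂ =>
    intro k
    obtain ⟨m, rfl⟩ := tri_a hT k (ih₁ _)
    rw [ih₂ m, comp_zero]
  | retract i r e _ ih =>
    intro f
    rw [← Category.id_comp f, ← e, Category.assoc, ih (r ≫ f), comp_zero]

/-- A class of objects containing zero, closed under extensions and cones. -/
structure GoodCls (D : Set C) : Prop where
  zero : ∀ X : C, IsZero X → X ∈ D
  ext : ∀ {X Y Z : C} {f : X ⟶ Y} {g : Y ⟶ Z} {h : Z ⟶ X⟦(1 : ℤ)⟧},
    Triangle.mk f g h ∈ (distTriang C) → X ∈ D → Z ∈ D → Y ∈ D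
  cone : ∀ {X Y Z : C} {f : X ⟶ Y} {g : Y ⟶ Z} {h : Z ⟶ X⟦(1 : ℤ)⟧},
    Triangle.mk f g h ∈ (distTriang C) → X ∈ D → Y ∈ D → Z ∈ D

lemma goodCls_univ : GoodCls (Set.univ : Set C) :=
  ⟨fun _ _ => trivial, fun _ _ _ => trivial, fun _ _ _ => trivial⟩

lemma goodCls_compacts : GoodCls (compacts C) :=
  ⟨fun _ h => compact_zero h, fun h₁ h₂ h₃ => compact_ext h₁ h₂ h₃,
    fun h₁ h₂ h₃ => compact_cone h₁ h₂ h₃⟩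

lemma orth_mem {R : ℤ → Set C} (hR : IsOrthMetric C R) {j : ℤ} {X X' : C} (hX : X ∈ R j)
    (H : ∀ t : C, (∀ x : X ⟶ t, x = 0) → ∀ x : X' ⟶ t, x = 0) : X' ∈ R j := by
  rw [← hR.orth j] at hX ⊢
  exact fun t ht => H t (hX t ht)

lemma starA {R : ℤ → Set C} (hR : IsOrthMetric C R) {D L S : Set C} (hD : GoodCls D)
    (hL : L ⊆ D) (hS : S ⊆ D) (j : ℤ) :
    starSet C L (starSet C S (R j ∩ D)) ⊆ starSet C (starSet C L S) (R j ∩ D) := by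
  rintro K ⟨E₁, D₁, a, b, c, h₁, hE₁, E', D₂, a', b', c', h₂, hE', hD₂⟩
  obtain ⟨E₂, D', i, p, q, φ, r, s, h₃, h₄, H⟩ := lemA h₁ h₂
  refine ⟨E₂, D', φ, r, s, h₄, ⟨E₁, E', i, p, q, h₃, hE₁, hE'⟩, orth_mem hR hD₂.1 H, ?_⟩
  exact hD.cone h₄ (hD.ext h₃ (hL hE₁) (hS hE'))
    (hD.ext h₁ (hL hE₁) (hD.ext h₂ (hS hE') hD₂.2))

lemma PP_sub {D L : Set C} (hD : GoodCls D) (hL : L ⊆ D) (n : ℕ) : PP L n ⊆ D := by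
  induction n with
  | zero => exact fun X hX => hD.zero X hX
  | succ n ih =>
    rintro Y ⟨X, Z, f, g, h, hT, hX, hZ⟩
    exact hD.ext hT (hL hX) (ih hZ)

lemma NN_sub_star {R : ℤ → Set C} (hR : IsOrthMetric C R) {D L : Set C} (hD : GoodCls D)
    (hL : L ⊆ D) (j : ℤ) (n : ℕ) :
    NN L (R j ∩ D) n ⊆ starSet C (PP L n) (R j ∩ D) := by
  induction n with
  | zero =>
    intro K hK
    exact ⟨_, K, _, _, _, contractible_distinguished₁ K, isZero_zero C, hK⟩
  | succ n ih => exact (star_mono subset_rfl ih).trans (starA hR hD hL (PP_sub hD hL n) j)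

lemma star_sub_NN {R : ℤ → Set C} (hR : IsOrthMetric C R) {D L : Set C} (hD : GoodCls D)
    (hL : L ⊆ D) (j : ℤ) (n : ℕ) {X K D₁ : C} {f : X ⟶ K} {g : K ⟶ D₁} {h : D₁ ⟶ X⟦(1 : ℤ)⟧}
    (hT : Triangle.mk f g h ∈ (distTriang C)) (hX : X ∈ PP L n) (hK : K ∈ D)
    (hD₁ : D₁ ∈ R j) : K ∈ NN L (R j ∩ D) n := by
  induction n generalizing X K D₁ with
  | zero =>
    refine ⟨orth_mem hR hD₁ (fun t ht x => ?_), hK⟩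
    obtain ⟨m, rfl⟩ := tri_a hT x (IsZero.eq_of_src hX _ _)
    rw [ht m, comp_zero]
  | succ n ih =>
    obtain ⟨Q, X'', u, v, w, h₁, hQ, hX''⟩ := hX
    obtain ⟨V, g', h', h₃⟩ := distinguished_cocone_triangle (u ≫ f)
    obtain ⟨D', q, r, s, h₄, H⟩ := lemB h₁ hT h₃
    exact ⟨Q, V, _, _, _, h₃, hQ, ih h₄ hX'' (hD.cone h₃ (hL hQ) hK) (orth_mem hR hD₁ H)⟩

lemma NN_retr {L L' B B' : Set C} (hL : L ⊆ L') (n k : ℕ)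
    (hB : ∀ V ∈ B, ∃ V' ∈ NN L' B' n, Retr V V') {K : C} (hK : K ∈ NN L B k) :
    ∃ K' ∈ NN L' B' (n + k), Retr K K' := by
  induction k generalizing K with
  | zero => exact hB K hK
  | succ k ih =>
    obtain ⟨Q, V, f, g, h, hT, hQ, hV⟩ := hK
    obtain ⟨V', hV', hr⟩ := ih hV
    obtain ⟨Y', f', g', h', hT', hr'⟩ := retr_star hT (Retr.refl Q) hr
    exact ⟨Y', ⟨Q, V', f', g', h', hT', hL hQ, hV'⟩, hr'⟩


lemma unionIcc_sub_compacts {G : ℤ → Set C} (hG : IsGenSeq C G) (a b : ℤ) :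
    unionIcc C G a b ⊆ compacts C := by
  intro X hX
  simp only [unionIcc, Set.mem_iUnion] at hX
  obtain ⟨m, _, h⟩ := hX
  exact hG.compact m h

lemma unionIic_sub_compacts {G : ℤ → Set C} (hG : IsGenSeq C G) (b : ℤ) :
    unionIic C G b ⊆ compacts C := by
  intro X hX
  simp only [unionIic, Set.mem_iUnion] at hX
  obtain ⟨m, _, h⟩ := hX
  exact hG.compact m h

lemma unionIcc_mono {G : ℤ → Set C} {a b a' b' : ℤ} (ha : a' ≤ a) (hb : b ≤ b') :
    unionIcc C G a b ⊆ unionIcc C G a' b' :=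
  Set.biUnion_subset_biUnion_left (Set.Icc_subset_Icc ha hb)

lemma unionIcc_sub_Iic {G : ℤ → Set C} (a b : ℤ) :
    unionIcc C G a b ⊆ unionIic C G b :=
  Set.biUnion_subset_biUnion_left (fun _ h => h.2)

lemma unionIic_mono {G : ℤ → Set C} {b b' : ℤ} (hb : b ≤ b') :
    unionIic C G b ⊆ unionIic C G b' :=
  Set.biUnion_subset_biUnion_left (Set.Iic_subset_Iic.2 hb)

lemma compact_hom_zero {G R : ℤ → Set C} {A : ℤ} (hG : IsGenSeq C G)
    (hv : ∀ n i : ℤ, A ≤ n + i → homZero C (G n) (R i)) {P : C} (hP : P ∈ compacts C) :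
    ∃ N : ℤ, ∀ n, N ≤ n → ∀ t ∈ R n, ∀ f : P ⟶ t, f = 0 := by
  rw [← hG.generates] at hP
  obtain ⟨Y, hY, i, r, e⟩ := hP
  have : ∃ N : ℤ, ∀ n, N ≤ n → ∀ t ∈ R n, ∀ f : Y ⟶ t, f = 0 := by
    change extClosure C _ Y at hY
    clear e
    induction hY with
    | of h =>
      simp only [unionAll, Set.mem_iUnion] at h
      obtain ⟨m, h⟩ := h
      exact ⟨A - m, fun n hn t ht f => hv m n (by omega) _ h t ht f⟩
    | zero h => exact ⟨0, fun n _ t _ f => h.eq_of_src _ _⟩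
    | @ext X Y Z f g h hT _ _ ih₁ ih₂ =>
      obtain ⟨N₁, h₁⟩ := ih₁ 0 0
      obtain ⟨N₂, h₂⟩ := ih₂ 0 0
      refine ⟨max N₁ N₂, fun n hn t ht k => ?_⟩
      obtain ⟨m, rfl⟩ := tri_a hT k (h₁ n (le_trans (le_max_left _ _) hn) t ht _)
      rw [h₂ n (le_trans (le_max_right _ _) hn) t ht m, comp_zero]
  obtain ⟨N, hN⟩ := this
  refine ⟨N, fun n hn t ht f => ?_⟩
  rw [← Category.id_comp f, ← e, Category.assoc, hN n hn t ht (r ≫ f), comp_zero]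

/-- The abstract weak approximation property relative to a class `D`. -/
def WAP (G R : ℤ → Set C) (A : ℤ) (D : Set C) : Prop :=
  ∀ j : ℤ, ∀ F ∈ R j ∩ D, F ∈ starSet C ({X | bigClosure C (unionIcc C G (-A - j) (A - j)) X} ∩ D)
    (R (j + 1) ∩ D)

/-- The abstract approximation property relative to a class `D`. -/
def SAP (G R : ℤ → Set C) (A : ℤ) (D : Set C) : Prop :=
  ∀ j : ℤ, ∀ F ∈ R j ∩ D, F ∈ starSet C
    {E | ∃ X ∈ PP (bigAddClosure C (unionIcc C G (-A - j) (A - j)) ∩ D) A.toNat, Retr E X}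
    (R (j + 1) ∩ D)

lemma fac_R {G R : ℤ → Set C} {A : ℤ} {D : Set C} (hG : IsGenSeq C G)
    (hv : ∀ n i : ℤ, A ≤ n + i → homZero C (G n) (R i))
    (hW : WAP G R A D) (j : ℤ) {F : C} (hF : F ∈ R j ∩ D) :
    Fac {X | extClosure C (unionIic C G (A - j)) X} F := by
  have key : ∀ (n : ℕ) (j : ℤ) (F : C), F ∈ R j ∩ D → ∀ P ∈ compacts C,
      (∀ t ∈ R (j + n), ∀ f : P ⟶ t, f = 0) → ∀ f : P ⟶ F,
      FacMap {X | extClosure C (unionIic C G (A - j)) X} f := by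
    intro n
    induction n with
    | zero =>
      intro j F hF P hP h f
      rw [h F (by simpa using hF.1) f]
      exact facMap_zero
    | succ n ih =>
      intro j F hF P hP h f
      obtain ⟨E, D', a, b, c, hT, hE, hD'⟩ := hW j F hF
      have h1 := ih (j + 1) D' hD' P hP (by
        have : j + 1 + (n : ℤ) = j + ((n + 1 : ℕ) : ℤ) := by push_cast; ring
        rw [this]; exact h) (f ≫ b)
      have h2 : Fac {X | extClosure C (unionIic C G (A - j)) X} E :=
        (fac_bigClosure (unionIcc_sub_compacts hG _ _) hE.1).mono
          (fun X hX => extClosure_mono (unionIcc_sub_Iic _ _) hX)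
      have h3 := h1.mono (S' := {X | extClosure C (unionIic C G (A - j)) X})
        (fun X hX => extClosure_mono (unionIic_mono (by omega)) hX)
      exact (facMap_star (fun X hX => extClosure_compact (unionIic_sub_compacts hG _) hX)
        hT h2 hP f h3).mono extClosure_star
  intro P hP f
  obtain ⟨N, hN⟩ := compact_hom_zero hG hv hP
  exact key (N - j).toNat j F hF P hP (hN _ (by omega)) f

lemma weak_main {G R : ℤ → Set C} {A : ℤ} {D : Set C} (hR : IsOrthMetric C R) (hD : GoodCls D)
    (hW : WAP G R A D) (i m : ℤ) (n : ℕ) (j : ℤ) (hij : i ≤ j) (hj : j + n = i + m) {F : C}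
    (hF : F ∈ R j ∩ D) :
    F ∈ starSet C ({X | bigClosure C (unionIcc C G (-A - m + 1 - i) (A - i)) X} ∩ D)
      (R (i + m) ∩ D) := by
  induction n generalizing j F with
  | zero =>
    refine ⟨_, F, _, _, _, contractible_distinguished₁ F,
      ⟨.zero (isZero_zero C), hD.zero _ (isZero_zero C)⟩, ?_⟩
    rw [← hj]; simpa using hF
  | succ n ih =>
    push_cast at hj
    obtain ⟨E, D', a, b, c, hT, hE, hD'⟩ := hW j F hF
    have h1 := ih (j + 1) (by omega) (by omega) hD'
    have h2 := starA hR hD (L := {X | bigClosure C (unionIcc C G (-A - m + 1 - i) (A - i)) X} ∩ D)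
      (S := {X | bigClosure C (unionIcc C G (-A - m + 1 - i) (A - i)) X} ∩ D)
      Set.inter_subset_right Set.inter_subset_right (i + m)
      ⟨E, D', a, b, c, hT,
        ⟨bigClosure_mono (unionIcc_mono (by omega) (by omega)) hE.1, hE.2⟩, h1⟩
    refine star_mono ?_ subset_rfl h2
    rintro Y ⟨X, Z, f, g, h, hT, hX, hZ⟩
    exact ⟨.ext f g h hT hX.1 hZ.1, hD.ext hT hX.2 hZ.2⟩

lemma strong_main {G R : ℤ → Set C} {A : ℤ} {D : Set C} (hR : IsOrthMetric C R) (hD : GoodCls D)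
    (hS : SAP G R A D) (i m : ℤ) (n : ℕ) (j : ℤ) (hij : i ≤ j) (hj : j + n = i + m) {F : C}
    (hF : F ∈ R j ∩ D) :
    ∃ W ∈ NN (bigAddClosure C (unionIcc C G (-A - m + 1 - i) (A - i)) ∩ D)
      (R (i + m) ∩ D) (n * A.toNat), Retr F W := by
  induction n generalizing j F with
  | zero =>
    refine ⟨F, ?_, Retr.refl F⟩
    rw [Nat.zero_mul, ← hj]
    change F ∈ R _ ∩ D
    simpa using hF
  | succ n ih =>
    push_cast at hj
    obtain ⟨E, D', a, b, c, hT, ⟨X, hX, hEX⟩, hD'⟩ := hS j F hF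
    obtain ⟨Y', f', g', h', hT', hr⟩ := retr_star hT hEX (Retr.refl D')
    have hXD : X ∈ D := PP_sub hD Set.inter_subset_right _ hX
    have h1 := star_sub_NN hR hD Set.inter_subset_right (j + 1) _ hT' hX
      (hD.ext hT' hXD hD'.2) hD'.1
    obtain ⟨K', hK', hr'⟩ := NN_retr
      (L' := bigAddClosure C (unionIcc C G (-A - m + 1 - i) (A - i)) ∩ D)
      (Set.inter_subset_inter_left D (bigAdd_mono (unionIcc_mono (by omega) (by omega))))
      (n * A.toNat) A.toNat (fun V hV => ih (j + 1) (by omega) (by omega) hV) h1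
    refine ⟨K', ?_, hr.trans hr'⟩
    rw [Nat.succ_mul]
    exact hK'

lemma quasi_compact {K E D K₁ r : C} {a : E ⟶ K} {β : K ⟶ D} {γ : D ⟶ E⟦(1 : ℤ)⟧}
    {k : K₁ ⟶ D} {ρ : D ⟶ r} {d : r ⟶ K₁⟦(1 : ℤ)⟧}
    (hT : Triangle.mk a β γ ∈ (distTriang C)) (hT' : Triangle.mk k ρ d ∈ (distTriang C))
    (hK : K ∈ compacts C) (hK₁ : K₁ ∈ compacts C) (hKr : ∀ f : K ⟶ r, f = 0)
    (hEr : ∀ f : E⟦(1 : ℤ)⟧ ⟶ r, f = 0) : E ∈ compacts C := by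
  obtain ⟨β₁, hβ₁⟩ := tri_co2 hT' β (hKr _)
  obtain ⟨B, γ', δ', hB⟩ := distinguished_cocone_triangle β₁
  have hr := tri_rot hT
  obtain ⟨φ, hφ₁, hφ₂⟩ := tr3_3 hB hr (𝟙 _) k (by rw [Category.id_comp, hβ₁])
  rw [CategoryTheory.Functor.map_id, Category.comp_id] at hφ₂
  have h1 : (-a⟦(1 : ℤ)⟧') ≫ β₁⟦(1 : ℤ)⟧' = 0 := by
    obtain ⟨y, hy⟩ := tri_co1 hT' ((-a⟦(1 : ℤ)⟧') ≫ β₁⟦(1 : ℤ)⟧') (by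
      rw [Category.assoc, ← Functor.map_comp, ← hβ₁, Preadditive.neg_comp, ← Functor.map_comp,
        tri_fg hT, Functor.map_zero, neg_zero])
    rw [hy, hEr y, zero_comp]
  obtain ⟨ψ₀, hψ₀⟩ := tri_co1 hB _ h1
  obtain ⟨y, hy⟩ := tri_co3 hr (ψ₀ ≫ φ - 𝟙 _) (by
    rw [Preadditive.sub_comp, Category.assoc, ← hφ₂, ← hψ₀, Category.id_comp, sub_self])
  obtain ⟨y₁, rfl⟩ := tri_co2 hT' y (hEr _)
  apply compact_of_shift
  refine compact_retr ⟨ψ₀ - y₁ ≫ γ', φ, ?_⟩ (compact_cone hB hK hK₁)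
  rw [Preadditive.sub_comp, Category.assoc, hφ₁, ← Category.assoc, ← hy]
  abel

lemma compacts_sub_clos {R : ℤ → Set C} (hR : IsOrthMetric C R) :
    compacts C ⊆ closCompacts C R := by
  intro K hK
  simp only [closCompacts, Set.mem_iInter]
  exact fun n => ⟨K, _, _, _, _, contractible_distinguished K, hK,
    hR.zero_mem n _ (isZero_zero C)⟩

lemma quasi_compact' {G R : ℤ → Set C} {A : ℤ} (hG : IsGenSeq C G) (hR : IsOrthMetric C R)
    (hv : ∀ n i : ℤ, A ≤ n + i → homZero C (G n) (R i)) {K E D : C}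
    {a : E ⟶ K} {β : K ⟶ D} {γ : D ⟶ E⟦(1 : ℤ)⟧}
    (hT : Triangle.mk a β γ ∈ (distTriang C)) (hK : K ∈ compacts C)
    (hD : D ∈ closCompacts C R) (p q : ℤ) (hE : bigClosure C (unionIcc C G p q) E) :
    E ∈ compacts C := by
  obtain ⟨N, hN⟩ := compact_hom_zero hG hv hK
  let n := max N (A + 1 - p)
  have hn₁ : N ≤ n := le_max_left _ _
  have hn₂ : A + 1 - p ≤ n := le_max_right _ _
  simp only [closCompacts, Set.mem_iInter] at hD
  obtain ⟨K₁, r, k, ρ, d, hT', hK₁, hr⟩ := hD n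
  refine quasi_compact hT hT' hK hK₁ (hN n hn₁ r hr) ?_
  have hr' : r⟦(-1 : ℤ)⟧ ∈ R (n - 1) :=
    hR.shift_neg_one (n - 1) ⟨r, by rwa [sub_add_cancel], ⟨Iso.refl _⟩⟩
  have h0 : ∀ g : E ⟶ r⟦(-1 : ℤ)⟧, g = 0 := by
    refine bigClosure_hom_zero (fun x hx f => ?_) hE
    simp only [unionIcc, Set.mem_iUnion] at hx
    obtain ⟨m, hm, hx⟩ := hx
    exact hv m (n - 1) (by have := hm.1; omega) x hx _ hr' f
  intro f
  let u := (shiftFunctorCompIsoId C (1 : ℤ) (-1) (by norm_num)).app E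
  apply (shiftFunctor C (-1 : ℤ)).map_injective
  rw [← cancel_epi u.inv, Functor.map_zero, comp_zero]
  exact h0 _

/-! ### Splitting off -/

lemma exists_csum {K Y : C} (h : Retr K Y) : ∃ L : C, Nonempty (Y ≅ csum C K L) := by
  obtain ⟨i, r, e⟩ := h
  obtain ⟨L, p, q, hT⟩ := distinguished_cocone_triangle i
  obtain ⟨s, hs⟩ := tri_a hT (𝟙 Y - r ≫ i) (by
    rw [Preadditive.comp_sub, ← Category.assoc, e]; simp)
  have hps : p ≫ s = 𝟙 Y - r ≫ i := hs.symm
  have hq : q = 0 := by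
    have h1 := tri_hf hT
    have h2 := congrArg (fun z => z ≫ r⟦(1 : ℤ)⟧') h1
    simpa [← Functor.map_comp, e] using h2
  have hsp : s ≫ p = 𝟙 L := by
    obtain ⟨y, hy⟩ := tri_b hT (s ≫ p - 𝟙 L) (by
      rw [Preadditive.comp_sub, ← Category.assoc, hps, Preadditive.sub_comp, Category.assoc,
        tri_fg hT]; simp)
    rw [hq, zero_comp, sub_eq_zero] at hy
    exact hy
  have hip : i ≫ p = 0 := tri_fg hT
  have hsr : s ≫ r = 0 := by
    obtain ⟨y, hy⟩ := tri_b hT (s ≫ r) (by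
      rw [← Category.assoc, hps, Preadditive.sub_comp, Category.assoc, e]; simp)
    rw [hy, hq, zero_comp]
  let F : ULift.{v} Bool → C := fun b => cond b.down K L
  let ιK : K ⟶ csum C K L := Sigma.ι F ⟨true⟩
  let ιL : L ⟶ csum C K L := Sigma.ι F ⟨false⟩
  let dd : csum C K L ⟶ Y := Sigma.desc (f := F) (fun b => match b with
    | ⟨true⟩ => i
    | ⟨false⟩ => s)
  have hK : ιK ≫ dd = i := Sigma.ι_desc (f := F) _ _
  have hL : ιL ≫ dd = s := Sigma.ι_desc (f := F) _ _
  refine ⟨L, ⟨⟨r ≫ ιK + p ≫ ιL, dd, ?_, ?_⟩⟩⟩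
  · rw [Preadditive.add_comp, Category.assoc, Category.assoc, hK, hL, hps]
    abel
  · apply Sigma.hom_ext (f := F)
    rintro ⟨_ | _⟩
    · change ιL ≫ dd ≫ _ = ιL ≫ 𝟙 _
      rw [← Category.assoc, hL, Preadditive.comp_add, ← Category.assoc, hsr, ← Category.assoc, hsp]
      simp
    · change ιK ≫ dd ≫ _ = ιK ≫ 𝟙 _
      rw [← Category.assoc, hK, Preadditive.comp_add, ← Category.assoc, e, ← Category.assoc, hip]
      simp

lemma finish {S S' : Set C} (hS' : S' ⊆ compacts C) {K W : C} (hK : K ∈ compacts C)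
    (hKW : Retr K W) {X Z : C} {f : X ⟶ W} {g : W ⟶ Z} {h : Z ⟶ X⟦(1 : ℤ)⟧}
    (hT : Triangle.mk f g h ∈ (distTriang C)) (hX : Fac S X) (hZ : Fac S' Z) :
    ∃ L : C, approxTriangle C (csum C K L) (smd C S) (smd C S') := by
  obtain ⟨Y, ⟨E, D, a, b, c, hT', hE, hD⟩, hr⟩ :=
    ((fac_star hS' hT hX hZ).retr hKW).compact_mem hK
  obtain ⟨L, ⟨e⟩⟩ := exists_csum hr
  exact ⟨L, E, D, _, _, _, tri_iso2 hT' e, ⟨E, hE, 𝟙 _, 𝟙 _, by simp⟩,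
    ⟨D, hD, 𝟙 _, 𝟙 _, by simp⟩⟩

lemma weak_final {G R : ℤ → Set C} {A : ℤ} {D : Set C} (hG : IsGenSeq C G)
    (hR : IsOrthMetric C R) (hD : GoodCls D)
    (hv : ∀ n i : ℤ, A ≤ n + i → homZero C (G n) (R i))
    (hW : WAP G R A D) (hcD : compacts C ⊆ D) (i m : ℤ) (hm : 0 < m) (K : C)
    (hK : K ∈ compacts C ∩ R i) :
    ∃ L : C, approxTriangle C (csum C K L)
        (gInt C G (-A - m + 1 - i) (A - i)) (gIic C G (A - m - i)) := by
  obtain ⟨E, D', a, b, c, hT, hE, hD'⟩ := weak_main hR hD hW i m m.toNat i le_rfl (by omega)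
    ⟨hK.2, hcD hK.1⟩
  have h1 := fac_R hG hv hW _ hD'
  rw [show A - (i + m) = A - m - i by ring] at h1
  exact finish (fun X hX => extClosure_compact (unionIic_sub_compacts hG _) hX) hK.1
    (Retr.refl K) hT (fac_bigClosure (unionIcc_sub_compacts hG _ _) hE.1) h1

lemma strong_final {G R : ℤ → Set C} {A : ℤ} {D : Set C} (hG : IsGenSeq C G)
    (hR : IsOrthMetric C R) (hD : GoodCls D) (hA : 0 < A)
    (hv : ∀ n i : ℤ, A ≤ n + i → homZero C (G n) (R i))
    (hW : WAP G R A D) (hS : SAP G R A D) (hcD : compacts C ⊆ D) (i m : ℤ) (hm : 0 < m) (K : C)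
    (hK : K ∈ compacts C ∩ R i) :
    ∃ L : C, approxTriangle C (csum C K L)
        (gIntPow C G (-A - m + 1 - i) (A - i) (m * A)) (gIic C G (A - m - i)) := by
  obtain ⟨W, hW', hr⟩ := strong_main hR hD hS i m m.toNat i le_rfl (by omega)
    ⟨hK.2, hcD hK.1⟩
  obtain ⟨E, D', a, b, c, hT, hE, hD'⟩ :=
    NN_sub_star hR hD Set.inter_subset_right _ _ hW'
  have h1 := fac_R hG hv hW _ hD'
  rw [show A - (i + m) = A - m - i by ring] at h1
  have h2 := fac_PP (unionIcc_sub_compacts hG _ _) _ (PP_mono Set.inter_subset_left _ hE)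
  have h3 : m.toNat * A.toNat = (m * A).toNat := by
    rw [Int.toNat_mul hm.le hA.le]
  rw [h3] at h2
  exact finish (fun X hX => extClosure_compact (unionIic_sub_compacts hG _) hX) hK.1
    hr hT h2 h1

lemma wap_univ {G R : ℤ → Set C} {A : ℤ} (h : IsWeakGApprox C G R A) :
    WAP G R A Set.univ := by
  intro j F hF
  obtain ⟨E, D, f, g, k, hT, hE, hD⟩ := h.approx j F hF.1
  exact ⟨E, D, f, g, k, hT, ⟨hE, trivial⟩, ⟨hD, trivial⟩⟩

lemma sap_univ {G R : ℤ → Set C} {A : ℤ} (h : IsGApprox C G R A) :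
    SAP G R A Set.univ := by
  intro j F hF
  obtain ⟨E, D, f, g, k, hT, ⟨X, hX, hr⟩, hD⟩ := h.approx' j F hF.1
  rw [coprodPowBig_eq] at hX
  have hX2 : X ∈ PP (bigAddClosure C (unionIcc C G (-A - j) (A - j)) ∩ Set.univ) A.toNat :=
    PP_mono (Set.subset_inter subset_rfl (Set.subset_univ _)) _ hX
  exact ⟨E, D, f, g, k, hT, ⟨X, hX2, hr⟩, ⟨hD, trivial⟩⟩

lemma wap_compacts {G R : ℤ → Set C} {A : ℤ} (hG : IsGenSeq C G)
    (h : IsWeakGQuasiApprox C G R A) : WAP G R A (compacts C) := by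
  intro j F hF
  obtain ⟨E, D, f, g, k, hT, hE, hD⟩ := h.approx j F ⟨hF.1, compacts_sub_clos h.orthMetric hF.2⟩
  have hc := quasi_compact' hG h.orthMetric h.hom_vanish hT hF.2 hD.2 _ _ hE
  exact ⟨E, D, f, g, k, hT, ⟨hE, hc⟩, ⟨hD.1, compact_cone hT hc hF.2⟩⟩

lemma sap_compacts {G R : ℤ → Set C} {A : ℤ} (hG : IsGenSeq C G)
    (h : IsGQuasiApprox C G R A) : SAP G R A (compacts C) := by
  intro j F hF
  obtain ⟨E, D, f, g, k, hT, ⟨X, hX, i, r, e⟩, hD⟩ :=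
    h.approx' j F ⟨hF.1, compacts_sub_clos h.orthMetric hF.2⟩
  rw [coprodPowBig_eq] at hX
  have hc := quasi_compact' hG h.orthMetric h.hom_vanish hT hF.2 hD.2 _ _
    (.retract i r e (PP_bigClosure _ hX))
  obtain ⟨X', hX', hr⟩ := (Fac.retr ⟨i, r, e⟩
    (fac_PP (unionIcc_sub_compacts hG _ _) _ hX)).compact_mem hc
  rw [coprodPow_eq] at hX'
  have hX2 : X' ∈ PP (bigAddClosure C (unionIcc C G (-A - j) (A - j)) ∩ compacts C) A.toNat :=
    PP_mono (fun Y hY => And.intro (add_sub_bigAdd _ hY)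
      (add_compact (unionIcc_sub_compacts hG _ _) hY)) _ hX'
  exact ⟨E, D, f, g, k, hT, ⟨X', hX2, hr⟩, ⟨hD.1, compact_cone hT hc hF.2⟩⟩

end Helpers

theorem statement_15 (G Rm : ℤ → Set C) (A : ℤ)
    (hcg : CompactlyGenerated C) (hG : IsGenSeq C G)
    (h : IsWeakGQuasiApprox C G Rm A ∨ IsWeakGApprox C G Rm A) :
    (∀ i m : ℤ, 0 < m → ∀ K ∈ compacts C ∩ Rm i,
      ∃ L : C, approxTriangle C (csum C K L)
        (gInt C G (-A - m + 1 - i) (A - i)) (gIic C G (A - m - i))) ∧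
    ((IsGQuasiApprox C G Rm A ∨ IsGApprox C G Rm A) →
      ∀ i m : ℤ, 0 < m → ∀ K ∈ compacts C ∩ Rm i,
        ∃ L : C, approxTriangle C (csum C K L)
          (gIntPow C G (-A - m + 1 - i) (A - i) (m * A)) (gIic C G (A - m - i))) := by
  refine ⟨?_, ?_⟩
  · rcases h with h | h
    · exact weak_final hG h.orthMetric goodCls_compacts h.hom_vanish (wap_compacts hG h) subset_rfl
    · exact weak_final hG h.orthMetric goodCls_univ h.hom_vanish (wap_univ h) (Set.subset_univ _)
  · rintro (h' | h')
    · exact strong_final hG h'.orthMetric goodCls_compacts h'.A_pos h'.hom_vanish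
        (wap_compacts hG h'.toIsWeakGQuasiApprox) (sap_compacts hG h') subset_rfl
    · exact strong_final hG h'.orthMetric goodCls_univ h'.A_pos h'.hom_vanish
        (wap_univ h'.toIsWeakGApprox) (sap_univ h') (Set.subset_univ _)

end GApprox
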